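/- With λ_1 := lim_{p→∞} λ_1(p), where λ_1(p) is the largest eigenvalue of Z_p := (A^{p/2} B^p A^{p/2})^{1/p}, one has λ_1 = max{ a_i b_j : 1 ≤ i, j ≤ d, (V*W)_{ij} ≠ 0 }, where (V*W)_{ij} denotes the (i,j) entry of the unitary matrix V*W. -/

import Mathlib

open Matrix Filter Topology Finset
open scoped ComplexOrder

/-- Functional-calculus power of a (Hermitian, in practice positive semidefinite)
matrix, with the convention `0 ^ r = 0` for `r > 0`. -/
noncomputable def psdPow {d : ℕ} (A : Matrix (Fin d) (Fin d) ℂ) (r : ℝ) :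
    Matrix (Fin d) (Fin d) ℂ :=
  if hA : A.IsHermitian then
    (hA.eigenvectorUnitary : Matrix (Fin d) (Fin d) ℂ) *
      Matrix.diagonal (fun i => ((hA.eigenvalues i ^ r : ℝ) : ℂ)) *
      star (hA.eigenvectorUnitary : Matrix (Fin d) (Fin d) ℂ)
  else 0

/-- The eigenvalues of a Hermitian matrix, sorted in decreasing order
(with multiplicities). -/
noncomputable def eigsDesc {d : ℕ} (A : Matrix (Fin d) (Fin d) ℂ) : Fin d → ℝ :=
  if hA : A.IsHermitian then
    fun i => hA.eigenvalues (Tuple.sort hA.eigenvalues i.rev)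
  else 0

/-- `Zmat A B p = (A^{p/2} B^p A^{p/2})^{1/p}`. -/
noncomputable def Zmat {d : ℕ} (A B : Matrix (Fin d) (Fin d) ℂ) (p : ℝ) :
    Matrix (Fin d) (Fin d) ℂ :=
  psdPow (psdPow A (p / 2) * psdPow B p * psdPow A (p / 2)) (1 / p)

/-!
The largest eigenvalue of `A^{p/2} B^p A^{p/2}` lies between the trace divided by `d` and the trace,
and by cyclicity that trace is `∑ i j, |(V*W)_{ij}|² (a_i b_j)^p`. In the limit the `1 / p`-th root
removes the dimension and the weights `|(V*W)_{ij}|²`, leaving the largest `a_i b_j` of nonzero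
weight.
-/

section PowerSums

theorem tendsto_const_rpow_one_div {c : ℝ} (hc : c ≠ 0) :
    Tendsto (fun p : ℝ => c ^ (1 / p)) atTop (𝓝 1) := by
  have hinv : Tendsto (fun p : ℝ => 1 / p) atTop (𝓝 0) := tendsto_const_nhds.div_atTop tendsto_id
  simpa using tendsto_const_nhds.rpow hinv (Or.inl hc)

theorem mul_rpow_rpow_one_div {c L p : ℝ} (hc : 0 ≤ c) (hL : 0 ≤ L) (hp : p ≠ 0) :
    (c * L ^ p) ^ (1 / p) = c ^ (1 / p) * L := by
  rw [Real.mul_rpow hc (Real.rpow_nonneg hL p), one_div, Real.rpow_rpow_inv hL hp]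

theorem tendsto_rpow_one_div_of_le_of_le {f : ℝ → ℝ} {c C L : ℝ} (hc : 0 < c) (hC : 0 < C)
    (hL : 0 ≤ L) (hlower : ∀ᶠ p in atTop, c * L ^ p ≤ f p)
    (hupper : ∀ᶠ p in atTop, f p ≤ C * L ^ p) :
    Tendsto (fun p => f p ^ (1 / p)) atTop (𝓝 L) := by
  have hroot {k : ℝ} (hk : 0 < k) : Tendsto (fun p : ℝ => k ^ (1 / p) * L) atTop (𝓝 L) := by
    simpa using (tendsto_const_rpow_one_div hk.ne').mul_const L
  refine tendsto_of_tendsto_of_tendsto_of_le_of_le' (hroot hc) (hroot hC) ?_ ?_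
  · filter_upwards [hlower, eventually_gt_atTop 0] with p hfp hp
    rw [← mul_rpow_rpow_one_div hc.le hL hp.ne']
    gcongr
  · filter_upwards [hlower, hupper, eventually_gt_atTop 0] with p hfp hfp' hp
    have : 0 ≤ f p := le_trans (by positivity) hfp
    rw [← mul_rpow_rpow_one_div hC.le hL hp.ne']
    gcongr

variable {ι : Type*} [Fintype ι] {w x : ι → ℝ} {L p : ℝ}

theorem mul_rpow_le_sum_mul_rpow (hw : ∀ i, 0 ≤ w i) (hx : ∀ i, 0 ≤ x i) (i : ι) :
    w i * x i ^ p ≤ ∑ k, w k * x k ^ p :=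
  single_le_sum (f := fun k => w k * x k ^ p)
    (fun k _ => mul_nonneg (hw k) (Real.rpow_nonneg (hx k) p)) (mem_univ i)

theorem sum_mul_rpow_le (hw : ∀ i, 0 ≤ w i) (hx : ∀ i, 0 ≤ x i) (hp : 0 ≤ p)
    (hL : ∀ i, w i ≠ 0 → x i ≤ L) : ∑ i, w i * x i ^ p ≤ (∑ i, w i) * L ^ p := by
  rw [Finset.sum_mul]
  refine sum_le_sum fun i _ => ?_
  obtain hwi | hwi := eq_or_ne (w i) 0
  · simp [hwi]
  · exact mul_le_mul_of_nonneg_left (Real.rpow_le_rpow (hx i) (hL i hwi) hp) (hw i)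

theorem tendsto_rpow_one_div_of_sum_mul_rpow {f : ℝ → ℝ} {K : ℝ} (hw : ∀ i, 0 ≤ w i)
    (hx : ∀ i, 0 ≤ x i) (hL : IsGreatest (x '' Function.support w) L) (hK : 0 < K)
    (hle : ∀ᶠ p in atTop, f p ≤ ∑ i, w i * x i ^ p)
    (hge : ∀ᶠ p in atTop, ∑ i, w i * x i ^ p ≤ K * f p) :
    Tendsto (fun p => f p ^ (1 / p)) atTop (𝓝 L) := by
  obtain ⟨⟨i, hi, rfl⟩, hmax⟩ := hL
  have hwi : 0 < w i := (hw i).lt_of_ne' hi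
  have hsum : 0 < ∑ k, w k := sum_pos' (fun k _ => hw k) ⟨i, mem_univ i, hwi⟩
  refine tendsto_rpow_one_div_of_le_of_le (div_pos hwi hK) hsum (hx i) ?_ ?_
  · filter_upwards [hge] with p hp
    rw [div_mul_eq_mul_div, div_le_iff₀' hK]
    exact (mul_rpow_le_sum_mul_rpow hw hx i).trans hp
  · filter_upwards [hle, eventually_ge_atTop 0] with p hfp hp
    exact hfp.trans (sum_mul_rpow_le hw hx hp fun k hk => hmax (Set.mem_image_of_mem x hk))

end PowerSums

theorem exists_apply_ne_zero_of_mem_unitaryGroup {n R : Type*} [Fintype n] [DecidableEq n]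
    [Nonempty n] [CommRing R] [StarRing R] [Nontrivial R] {U : Matrix n n R}
    (hU : U ∈ unitaryGroup n R) : ∃ i j, U i j ≠ 0 := by
  by_contra! hzero
  have hU0 : U = 0 := Matrix.ext hzero
  simpa [hU0] using mem_unitaryGroup_iff.1 hU

section Trace

variable {l m n 𝕜 : Type*} [RCLike 𝕜] [Fintype l] [Fintype m] [Fintype n] [DecidableEq n]

theorem trace_conj_diagonal_mul_conj_diagonal [DecidableEq m] (V : Matrix l m 𝕜)
    (W : Matrix l n 𝕜) (a : m → ℝ) (b : n → ℝ) :
    (V * diagonal (fun i => (a i : 𝕜)) * Vᴴ * (W * diagonal (fun j => (b j : 𝕜)) * Wᴴ)).trace =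
      ((∑ q : m × n, ‖(Vᴴ * W) q.1 q.2‖ ^ 2 * (a q.1 * b q.2) : ℝ) : 𝕜) := by
  have hcyclic : (V * diagonal (fun i => (a i : 𝕜)) * Vᴴ *
        (W * diagonal (fun j => (b j : 𝕜)) * Wᴴ)).trace =
      (diagonal (fun i => (a i : 𝕜)) * (Vᴴ * W) *
        (diagonal (fun j => (b j : 𝕜)) * (Vᴴ * W)ᴴ)).trace := by
    rw [conjTranspose_mul, conjTranspose_conjTranspose, Matrix.mul_assoc, Matrix.mul_assoc,
      trace_mul_comm]
    simp only [Matrix.mul_assoc]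
  rw [hcyclic, trace, Fintype.sum_prod_type]
  push_cast
  refine sum_congr rfl fun i _ => ?_
  rw [diag_apply, mul_apply]
  refine sum_congr rfl fun j _ => ?_
  rw [diagonal_mul, diagonal_mul, conjTranspose_apply, ← RCLike.mul_conj, starRingEnd_apply]
  ring

variable {A : Matrix n n 𝕜} {μ : ℝ}

theorem re_trace_eq_sum_eigenvalues (hA : A.IsHermitian) :
    RCLike.re A.trace = ∑ i, hA.eigenvalues i := by
  rw [hA.trace_eq_sum_eigenvalues, ← RCLike.ofReal_sum, RCLike.ofReal_re]

open scoped MatrixOrder in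
theorem nonneg_of_mem_spectrum_of_posSemidef (hA : A.PosSemidef)
    (hμ : μ ∈ spectrum ℝ A) : 0 ≤ μ :=
  spectrum_nonneg_of_nonneg hA.nonneg hμ

theorem le_re_trace_of_mem_spectrum (hA : A.PosSemidef) (hμ : μ ∈ spectrum ℝ A) :
    μ ≤ RCLike.re A.trace := by
  rw [hA.isHermitian.spectrum_real_eq_range_eigenvalues] at hμ
  obtain ⟨i, rfl⟩ := hμ
  rw [re_trace_eq_sum_eigenvalues hA.isHermitian]
  exact single_le_sum (fun k _ => hA.eigenvalues_nonneg k) (mem_univ i)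

theorem re_trace_le_card_mul (hA : A.IsHermitian) (hμ : μ ∈ upperBounds (spectrum ℝ A)) :
    RCLike.re A.trace ≤ Fintype.card n * μ := by
  rw [re_trace_eq_sum_eigenvalues hA, ← nsmul_eq_mul]
  exact sum_le_card_nsmul univ _ μ fun i _ => hμ (hA.eigenvalues_mem_spectrum_real i)

end Trace

section FunctionalCalculus

variable {n 𝕜 : Type*} [RCLike 𝕜] [DecidableEq n]

theorem isHermitian_diagonal_ofReal (a : n → ℝ) :
    (diagonal fun i => (a i : 𝕜)).IsHermitian :=
  isHermitian_diagonal_of_self_adjoint _ (funext fun i => by simp)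

variable [Fintype n]

-- Interpolating `f` on the finite spectrum by a polynomial reduces the claim to `Polynomial.aeval`.
theorem cfc_diagonal_ofReal (f : ℝ → ℝ) (a : n → ℝ) :
    cfc f (diagonal fun i => (a i : 𝕜)) = diagonal fun i => (f (a i) : 𝕜) := by
  let q := Lagrange.interpolate (univ.image a) id f
  have hq (i : n) : q.eval (a i) = f (a i) :=
    Lagrange.eval_interpolate_at_node f Function.injective_id.injOn
      (mem_image_of_mem a (mem_univ i))
  have hspec : (spectrum ℝ (diagonal fun i => (a i : 𝕜))).EqOn f q.eval := by
    intro μ hμ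
    rw [← spectrum.algebraMap_mem_iff 𝕜, spectrum_diagonal] at hμ
    obtain ⟨i, hi⟩ := hμ
    obtain rfl : a i = μ := RCLike.ofReal_injective hi
    exact (hq i).symm
  have haeval (i : n) : Polynomial.aeval (a i : 𝕜) q = (f (a i) : 𝕜) := by
    rw [← hq i]
    exact Polynomial.aeval_algebraMap_apply_eq_algebraMap_eval (a i) q
  calc cfc f (diagonal fun i => (a i : 𝕜))
      = Polynomial.aeval (diagonal fun i => (a i : 𝕜)) q := by
        rw [cfc_congr hspec]
        exact cfc_polynomial q _ (isHermitian_diagonal_ofReal a)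
    _ = diagonal (Polynomial.aeval (fun i => (a i : 𝕜)) q) :=
        Polynomial.aeval_algHom_apply (diagonalAlgHom ℝ) _ q
    _ = diagonal fun i => (f (a i) : 𝕜) :=
        congrArg diagonal (funext fun i => (Polynomial.aeval_pi_apply₂ _ _ i).trans (haeval i))

theorem cfc_conj_diagonal_ofReal {V : Matrix n n 𝕜} (hV : V ∈ unitaryGroup n 𝕜) (f : ℝ → ℝ)
    (a : n → ℝ) :
    cfc f (V * diagonal (fun i => (a i : 𝕜)) * Vᴴ) =
      V * diagonal (fun i => (f (a i) : 𝕜)) * Vᴴ := by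
  let conj := Unitary.conjStarAlgAut ℝ (Matrix n n 𝕜) ⟨V, hV⟩
  have hcont : Continuous conj := by
    change Continuous fun X : Matrix n n 𝕜 => V * X * Vᴴ
    fun_prop
  have hspec : (spectrum ℝ (diagonal fun i => (a i : 𝕜))).Finite := finite_real_spectrum
  rw [← cfc_diagonal_ofReal]
  exact (StarAlgHomClass.map_cfc (S := ℝ) conj f _ (hspec.continuousOn f) hcont
    (isHermitian_diagonal_ofReal a)
    (isHermitian_mul_mul_conjTranspose V (isHermitian_diagonal_ofReal a))).symm

theorem posSemidef_conj_diagonal_ofReal {m : Type*} [Finite m] (V : Matrix m n 𝕜) {a : n → ℝ}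
    (ha : ∀ i, 0 ≤ a i) : (V * diagonal (fun i => (a i : 𝕜)) * Vᴴ).PosSemidef :=
  (PosSemidef.diagonal fun i => RCLike.ofReal_nonneg.2 (ha i)).mul_mul_conjTranspose_same V

end FunctionalCalculus

section PsdPow

variable {d : ℕ} {A B : Matrix (Fin d) (Fin d) ℂ} {r s p : ℝ}

theorem psdPow_eq_cfc (A : Matrix (Fin d) (Fin d) ℂ) (r : ℝ) :
    psdPow A r = cfc (fun x : ℝ => x ^ r) A := by
  by_cases hA : A.IsHermitian
  · rw [psdPow, dif_pos hA, hA.cfc_eq]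
    rfl
  · rw [psdPow, dif_neg hA]
    exact (cfc_apply_of_not_predicate A hA).symm

theorem isHermitian_psdPow (A : Matrix (Fin d) (Fin d) ℂ) (r : ℝ) : (psdPow A r).IsHermitian := by
  rw [psdPow_eq_cfc]
  exact cfc_predicate (p := IsSelfAdjoint) _ A

open scoped MatrixOrder in
theorem posSemidef_psdPow (hA : A.PosSemidef) (r : ℝ) : (psdPow A r).PosSemidef := by
  rw [psdPow_eq_cfc, ← nonneg_iff_posSemidef]
  exact cfc_nonneg fun μ hμ => Real.rpow_nonneg (nonneg_of_mem_spectrum_of_posSemidef hA hμ) r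

theorem spectrum_psdPow (hA : A.IsHermitian) (r : ℝ) :
    spectrum ℝ (psdPow A r) = (fun x : ℝ => x ^ r) '' spectrum ℝ A := by
  rw [psdPow_eq_cfc]
  exact cfc_map_spectrum _ A hA (A.finite_real_spectrum.continuousOn _)

theorem psdPow_add (hA : A.PosSemidef) (hr : 0 ≤ r) (hs : 0 ≤ s) :
    psdPow A (r + s) = psdPow A r * psdPow A s := by
  have hcont (f : ℝ → ℝ) : ContinuousOn f (spectrum ℝ A) := A.finite_real_spectrum.continuousOn f
  simp only [psdPow_eq_cfc]
  rw [← cfc_mul _ _ A (hcont _) (hcont _)]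
  exact cfc_congr fun μ hμ =>
    Real.rpow_add_of_nonneg (nonneg_of_mem_spectrum_of_posSemidef hA hμ) hr hs

theorem isGreatest_spectrum_eigsDesc_zero (hA : A.IsHermitian) (hd : 0 < d) :
    IsGreatest (spectrum ℝ A) (eigsDesc A ⟨0, hd⟩) := by
  rw [eigsDesc, dif_pos hA, hA.spectrum_real_eq_range_eigenvalues]
  refine ⟨Set.mem_range_self _, ?_⟩
  rintro _ ⟨i, rfl⟩
  have hle : (Tuple.sort hA.eigenvalues).symm i ≤ Fin.rev ⟨0, hd⟩ := by
    rw [Fin.le_def, Fin.val_rev]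
    dsimp only
    omega
  simpa using Tuple.monotone_sort hA.eigenvalues hle

theorem eigsDesc_zero_psdPow (hA : A.PosSemidef) (hd : 0 < d) (hr : 0 ≤ r) :
    eigsDesc (psdPow A r) ⟨0, hd⟩ = eigsDesc A ⟨0, hd⟩ ^ r := by
  have hmono : MonotoneOn (fun x : ℝ => x ^ r) (spectrum ℝ A) := fun μ hμ ν _ h =>
    Real.rpow_le_rpow (nonneg_of_mem_spectrum_of_posSemidef hA hμ) h hr
  have htop := isGreatest_spectrum_eigsDesc_zero (isHermitian_psdPow A r) hd
  rw [spectrum_psdPow hA.isHermitian] at htop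
  exact htop.unique (hmono.map_isGreatest (isGreatest_spectrum_eigsDesc_zero hA.isHermitian hd))

theorem posSemidef_psdPow_mul_mul (A : Matrix (Fin d) (Fin d) ℂ) (hB : B.PosSemidef) (r s : ℝ) :
    (psdPow A r * psdPow B s * psdPow A r).PosSemidef := by
  simpa only [(isHermitian_psdPow A r).eq] using
    (posSemidef_psdPow hB s).mul_mul_conjTranspose_same (psdPow A r)

theorem eigsDesc_zero_Zmat (A : Matrix (Fin d) (Fin d) ℂ) (hB : B.PosSemidef) (hd : 0 < d)
    (hp : 0 ≤ p) :
    eigsDesc (Zmat A B p) ⟨0, hd⟩ =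
      eigsDesc (psdPow A (p / 2) * psdPow B p * psdPow A (p / 2)) ⟨0, hd⟩ ^ (1 / p) :=
  eigsDesc_zero_psdPow (posSemidef_psdPow_mul_mul A hB (p / 2) p) hd (one_div_nonneg.2 hp)

theorem trace_psdPow_half_mul_mul (hA : A.PosSemidef) (B : Matrix (Fin d) (Fin d) ℂ)
    (hp : 0 ≤ p) :
    (psdPow A (p / 2) * psdPow B p * psdPow A (p / 2)).trace =
      (psdPow A p * psdPow B p).trace := by
  have hp2 : 0 ≤ p / 2 := by positivity
  rw [trace_mul_comm, ← Matrix.mul_assoc, ← psdPow_add hA hp2 hp2, add_halves]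

end PsdPow

section LieTrotter

variable {d : ℕ} {V W : Matrix (Fin d) (Fin d) ℂ} {a b : Fin d → ℝ}

theorem psdPow_conj_diagonal_ofReal (hV : V ∈ unitaryGroup (Fin d) ℂ) (a : Fin d → ℝ) (r : ℝ) :
    psdPow (V * diagonal (fun i => (a i : ℂ)) * Vᴴ) r =
      V * diagonal (fun i => ((a i ^ r : ℝ) : ℂ)) * Vᴴ := by
  rw [psdPow_eq_cfc]
  exact cfc_conj_diagonal_ofReal hV _ a

theorem trace_psdPow_mul_psdPow (hV : V ∈ unitaryGroup (Fin d) ℂ)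
    (hW : W ∈ unitaryGroup (Fin d) ℂ) (ha : ∀ i, 0 ≤ a i) (hb : ∀ i, 0 ≤ b i) (p : ℝ) :
    (psdPow (V * diagonal (fun i => (a i : ℂ)) * Vᴴ) p *
        psdPow (W * diagonal (fun i => (b i : ℂ)) * Wᴴ) p).trace =
      ((∑ q : Fin d × Fin d, ‖(Vᴴ * W) q.1 q.2‖ ^ 2 * (a q.1 * b q.2) ^ p : ℝ) : ℂ) := by
  simp only [psdPow_conj_diagonal_ofReal hV, psdPow_conj_diagonal_ofReal hW,
    Real.mul_rpow (ha _) (hb _)]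
  exact trace_conj_diagonal_mul_conj_diagonal V W (fun i => a i ^ p) (fun j => b j ^ p)

theorem tendsto_eigsDesc_zero_Zmat (hd : 0 < d) (hV : V ∈ unitaryGroup (Fin d) ℂ)
    (hW : W ∈ unitaryGroup (Fin d) ℂ) (ha : ∀ i, 0 ≤ a i) (hb : ∀ i, 0 ≤ b i) {L : ℝ}
    (hL : IsGreatest {x : ℝ | ∃ i j : Fin d, (Vᴴ * W) i j ≠ 0 ∧ x = a i * b j} L) :
    Tendsto (fun p : ℝ => eigsDesc (Zmat (V * diagonal (fun i => (a i : ℂ)) * Vᴴ)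
      (W * diagonal (fun i => (b i : ℂ)) * Wᴴ) p) ⟨0, hd⟩) atTop (𝓝 L) := by
  set A := V * diagonal (fun i => (a i : ℂ)) * Vᴴ
  set B := W * diagonal (fun i => (b i : ℂ)) * Wᴴ
  have hA : A.PosSemidef := posSemidef_conj_diagonal_ofReal V ha
  have hB : B.PosSemidef := posSemidef_conj_diagonal_ofReal W hb
  let M (p : ℝ) := psdPow A (p / 2) * psdPow B p * psdPow A (p / 2)
  have hM (p : ℝ) : (M p).PosSemidef := posSemidef_psdPow_mul_mul A hB (p / 2) p
  have htop (p : ℝ) := isGreatest_spectrum_eigsDesc_zero (hM p).isHermitian hd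
  have htrace {p : ℝ} (hp : 0 ≤ p) : (M p).trace.re =
      ∑ q : Fin d × Fin d, ‖(Vᴴ * W) q.1 q.2‖ ^ 2 * (a q.1 * b q.2) ^ p := by
    rw [trace_psdPow_half_mul_mul hA B hp, trace_psdPow_mul_psdPow hV hW ha hb, Complex.ofReal_re]
  have hroot : Tendsto (fun p => eigsDesc (M p) ⟨0, hd⟩ ^ (1 / p)) atTop (𝓝 L) := by
    refine tendsto_rpow_one_div_of_sum_mul_rpow
      (w := fun q : Fin d × Fin d => ‖(Vᴴ * W) q.1 q.2‖ ^ 2) (x := fun q => a q.1 * b q.2)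
      (fun q => by positivity) (fun q => mul_nonneg (ha _) (hb _)) ?_ (Nat.cast_pos.2 hd) ?_ ?_
    · convert hL using 1
      ext x
      simp [eq_comm]
    · filter_upwards [eventually_ge_atTop 0] with p hp
      exact (le_re_trace_of_mem_spectrum (hM p) (htop p).1).trans_eq (htrace hp)
    · filter_upwards [eventually_ge_atTop 0] with p hp
      rw [← htrace hp]
      simpa using re_trace_le_card_mul (hM p).isHermitian (htop p).2
  refine hroot.congr' ?_
  filter_upwards [eventually_ge_atTop 0] with p hp
  exact (eigsDesc_zero_Zmat A hB hd hp).symm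

end LieTrotter

/-- The limit `λ_1` of the largest eigenvalue of `Z_p = (A^{p/2} B^p A^{p/2})^{1/p}`
as `p → ∞` exists and is the maximum of `{a_i b_j : (V*W)_{ij} ≠ 0}`. -/
theorem anti_lie_trotter_top_eigenvalue_limit
    {d : ℕ} (hd : 0 < d) (A B V W : Matrix (Fin d) (Fin d) ℂ) (a b : Fin d → ℝ)
    (hA : A.PosSemidef) (hB : B.PosSemidef)
    (hV : V ∈ Matrix.unitaryGroup (Fin d) ℂ)
    (hW : W ∈ Matrix.unitaryGroup (Fin d) ℂ)
    (ha : Antitone a) (hb : Antitone b)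
    (ha0 : ∀ i, 0 ≤ a i) (hb0 : ∀ i, 0 ≤ b i)
    (hAd : A = V * Matrix.diagonal (fun i => (a i : ℂ)) * Vᴴ)
    (hBd : B = W * Matrix.diagonal (fun i => (b i : ℂ)) * Wᴴ) :
    ∃ lam1 : ℝ,
      Tendsto (fun p : ℝ => eigsDesc (Zmat A B p) ⟨0, hd⟩) atTop (𝓝 lam1) ∧
      IsGreatest {x : ℝ | ∃ i j : Fin d, (Vᴴ * W) i j ≠ 0 ∧ x = a i * b j} lam1 := by
  subst hAd hBd
  let S := {x : ℝ | ∃ i j : Fin d, (Vᴴ * W) i j ≠ 0 ∧ x = a i * b j}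
  have hfinite : S.Finite := (Set.finite_range fun q : Fin d × Fin d => a q.1 * b q.2).subset <| by
    rintro _ ⟨i, j, -, rfl⟩
    exact ⟨(i, j), rfl⟩
  have hnonempty : S.Nonempty := by
    have : Nonempty (Fin d) := ⟨⟨0, hd⟩⟩
    obtain ⟨i, j, hij⟩ := exists_apply_ne_zero_of_mem_unitaryGroup
      (mul_mem (Unitary.star_mem hV) hW)
    exact ⟨_, i, j, hij, rfl⟩
  obtain ⟨L, hL⟩ := hfinite.isCompact.exists_isGreatest hnonempty
  exact ⟨L, tendsto_eigsDesc_zero_Zmat hd hV hW ha0 hb0 hL, hL⟩
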